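/- Let d ≥ 2 and 2 ≤ k ≤ d. For every real number t < max{k−1, d/2} there exists a compact set E ⊂ ℝ^d with Hausdorff dimension dim_H(E) > t such that the k(k+1)/2-dimensional Lebesgue measure of T_k(E) is zero. Consequently the optimal exponent α_{k,d}, defined as the infimum of those α for which dim_H(E) > α implies that T_k(E) has positive k(k+1)/2-dimensional Lebesgue measure, satisfies α_{k,d} ≥ max{k−1, d/2}. -/

import Mathlib

open MeasureTheory Metric Set Topology
open scoped ENNReal

noncomputable section

/-- `ℝ^d` as Euclidean space. -/
abbrev Pt (d : ℕ) := EuclideanSpace ℝ (Fin d)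

/-- The index set of pairs `i < j` in `{1, …, k+1}`; it has `k(k+1)/2` elements. -/
abbrev PairIdx (k : ℕ) : Type := {p : Fin (k+1) × Fin (k+1) // p.1 < p.2}

/-- The map sending a `(k+1)`-tuple of points to its vector of pairwise distances. -/
def simplexMap (d k : ℕ) (x : Fin (k+1) → Pt d) : PairIdx k → ℝ :=
  fun p => dist (x p.1.1) (x p.1.2)

/-- A `(k+1)`-tuple is nondegenerate if `x^2 - x^1, …, x^{k+1} - x^1` are linearly
independent. -/
def Nondeg (d k : ℕ) (x : Fin (k+1) → Pt d) : Prop :=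
  LinearIndependent ℝ (fun i : Fin k => x i.succ - x 0)

/-- `T_k(E)`: the set of congruence classes of nondegenerate `k`-simplices with vertices in `E`,
realized as a subset of `ℝ^{k(k+1)/2}` via the pairwise-distance map. -/
def Tconf (d k : ℕ) (E : Set (Pt d)) : Set (PairIdx k → ℝ) :=
  simplexMap d k '' {x | (∀ i, x i ∈ E) ∧ Nondeg d k x}

/-!
A ball in a `(k - 1)`-dimensional subspace contains no nondegenerate `k`-simplex, which gives the
bound `k - 1`. The bound `d / 2` is Falconer's example: the points all of whose coordinates have
base-`b` digits vanishing outside a set `S` of positions, where `S` has lower density close to `1/2`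
but leaves gaps `[p, q)` with `q - 2p` unbounded. Inserting zeros expands the differences of digit
prefixes, so deleting the forced zeros is `s`-Hölder when `S` has density at least `s`, and maps the
set onto a cube; hence its dimension is at least `d * s`. At a gap `[p, q)`, all points lie within
`O(b ^ (-q))` of the grid `b ^ (-p) ℤ ^ d` in the unit cube, whose distances are `b ^ (-p) √m`
with `m = O(b ^ (2p))`. So `O(b ^ (2p))` intervals of length `O(b ^ (-q))` cover all distances, and
already a single coordinate of `T_k(E)` ranges over a null set.
-/

open scoped NNReal

section LongGaps

variable {S : Set ℕ} [DecidablePred (· ∈ S)]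

lemma sub_le_count_of_Ico_subset {m p : ℕ} (h : Ico m p ⊆ S) : p - m ≤ Nat.count (· ∈ S) p := by
  rcases le_total p m with hpm | hmp
  · simp only [Nat.sub_eq_zero_of_le hpm, zero_le]
  · obtain ⟨l, rfl⟩ := Nat.exists_eq_add_of_le hmp
    have hl : Nat.count (fun i => m + i ∈ S) l = l :=
      Nat.count_of_forall fun i hi => h ⟨by omega, by omega⟩
    rw [Nat.count_add, hl]
    omega

/-- The natural numbers outside the gaps `[nK^(j+1), (2n+1)K^(j+1))`. The endpoints satisfy
`(2n+1)K^(j+1) = 2 · nK^(j+1) + K^(j+1)`, and for large `n` and `K` the set has lower density close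
to `1/2`. -/
def longGapSet (n K : ℕ) : Set ℕ :=
  {i | ∀ j, i ∉ Ico (n * K ^ (j + 1)) ((2 * n + 1) * K ^ (j + 1))}

variable {n K : ℕ}

lemma Ico_subset_longGapSet (hK : 0 < K) (j : ℕ) :
    Ico ((2 * n + 1) * K ^ j) (n * K ^ (j + 1)) ⊆ longGapSet n K := by
  rintro i ⟨hji, hij⟩ l ⟨hli, hil⟩
  rcases lt_or_ge l j with hlj | hjl
  · have : (2 * n + 1) * K ^ (l + 1) ≤ (2 * n + 1) * K ^ j := by gcongr; omega
    omega
  · have : n * K ^ (j + 1) ≤ n * K ^ (l + 1) := by gcongr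
    omega

lemma mul_le_count_longGapSet [DecidablePred (· ∈ longGapSet n K)] {s : ℝ} (hs : 0 ≤ s)
    (hK : 0 < K) (hnK : (2 * n + 1) * (s * K + 1) ≤ n * K) (p : ℕ) :
    s * p ≤ Nat.count (· ∈ longGapSet n K) p := by
  have hK' : (1 : ℝ) ≤ K := mod_cast hK
  have hs1 : s ≤ 1 := by
    by_contra! hs1
    nlinarith [mul_nonneg n.cast_nonneg' (by linarith : (0 : ℝ) ≤ K),
      mul_le_mul hs1.le hK' zero_le_one hs]
  -- The density at a gap's left end already pays for the whole gap.
  have count_gap_start (j : ℕ) : s * ((2 * n + 1) * K ^ (j + 1)) ≤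
      Nat.count (· ∈ longGapSet n K) (n * K ^ (j + 1)) := by
    have hcount : n * K ^ (j + 1) ≤
        Nat.count (· ∈ longGapSet n K) (n * K ^ (j + 1)) + (2 * n + 1) * K ^ j :=
      Nat.sub_le_iff_le_add.1 (sub_le_count_of_Ico_subset (Ico_subset_longGapSet hK j))
    have hcount' : (n * K ^ (j + 1) : ℝ) ≤
        Nat.count (· ∈ longGapSet n K) (n * K ^ (j + 1)) + (2 * n + 1) * K ^ j := mod_cast hcount
    have hmul := mul_le_mul_of_nonneg_right hnK (by positivity : (0 : ℝ) ≤ K ^ j)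
    rw [pow_succ] at hcount' ⊢
    linarith
  induction p with
  | zero => simp
  | succ p ih =>
    by_cases hp : p ∈ longGapSet n K
    · rw [Nat.count_succ, if_pos hp]
      push_cast
      linarith
    · obtain ⟨j, hjp, hpj⟩ : ∃ j, p ∈ Ico (n * K ^ (j + 1)) ((2 * n + 1) * K ^ (j + 1)) := by
        simpa only [longGapSet, mem_ofPred_eq, not_forall, not_not] using hp
      calc s * (p + 1 : ℕ) ≤ s * ((2 * n + 1) * K ^ (j + 1)) := by
            gcongr
            exact_mod_cast hpj
        _ ≤ Nat.count (· ∈ longGapSet n K) (n * K ^ (j + 1)) := count_gap_start j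
        _ ≤ Nat.count (· ∈ longGapSet n K) (p + 1) :=
          mod_cast Nat.count_monotone _ (hjp.trans p.le_succ)

lemma exists_gap_longGapSet (hK : 1 < K) (N : ℕ) :
    ∃ p q, 2 * p + N ≤ q ∧ ∀ i ∈ Ico p q, i ∉ longGapSet n K := by
  refine ⟨n * K ^ (N + 1), (2 * n + 1) * K ^ (N + 1), ?_, fun i hi hiS => hiS N hi⟩
  have : N + 1 < K ^ (N + 1) := Nat.lt_pow_self hK
  linarith

lemma exists_longGapSet_parameters {s : ℝ} (hs : s < 1 / 2) :
    ∃ n K : ℕ, 1 < K ∧ (2 * n + 1) * (s * K + 1) ≤ n * K := by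
  obtain ⟨n, hn⟩ := exists_nat_gt ((1 + s) / (1 - 2 * s))
  rw [div_lt_iff₀ (by linarith)] at hn
  refine ⟨n, 2 * n + 2, by omega, ?_⟩
  push_cast
  nlinarith [n.cast_nonneg' (α := ℝ)]

end LongGaps

section DigitExpansions

open Real (ofDigits ofDigitsTerm)

variable {b : ℕ}

/-- The integer whose base-`b` expansion is `a 0, …, a (p - 1)`, most significant digit first. -/
def digitPrefix (a : ℕ → Fin b) : ℕ → ℕ
  | 0 => 0
  | p + 1 => b * digitPrefix a p + a p

lemma digitPrefix_lt (a : ℕ → Fin b) (p : ℕ) : digitPrefix a p < b ^ p := by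
  induction p with
  | zero => simp [digitPrefix]
  | succ p ih =>
    calc b * digitPrefix a p + a p < b * (digitPrefix a p + 1) := by rw [mul_add_one]; omega
      _ ≤ b * b ^ p := by gcongr; omega
      _ = b ^ (p + 1) := (pow_succ' b p).symm

lemma pow_mul_sum_ofDigitsTerm (a : ℕ → Fin b) (p : ℕ) :
    (b : ℝ) ^ p * ∑ i ∈ Finset.range p, ofDigitsTerm a i = digitPrefix a p := by
  have hb : (b : ℝ) ≠ 0 := mod_cast (Fin.pos (a 0)).ne'
  induction p with
  | zero => simp [digitPrefix]
  | succ p ih =>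
    rw [Finset.sum_range_succ, digitPrefix, Nat.cast_add, Nat.cast_mul, ← ih, ofDigitsTerm]
    field_simp
    ring

lemma pow_mul_ofDigits (a : ℕ → Fin b) (p : ℕ) :
    (b : ℝ) ^ p * ofDigits a = digitPrefix a p + ofDigits (fun i => a (i + p)) := by
  have hb : (b : ℝ) ^ p ≠ 0 := pow_ne_zero p (mod_cast (Fin.pos (a 0)).ne')
  rw [Real.ofDigits_eq_sum_add_ofDigits a p, mul_add, pow_mul_sum_ofDigitsTerm,
    mul_inv_cancel_left₀ hb]

lemma abs_pow_mul_sub_digitPrefix_sub_le_one (a a' : ℕ → Fin b) (p : ℕ) :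
    |(b : ℝ) ^ p * (ofDigits a - ofDigits a') -
      ((digitPrefix a p : ℝ) - digitPrefix a' p)| ≤ 1 := by
  rw [mul_sub, pow_mul_ofDigits, pow_mul_ofDigits, add_sub_add_comm, add_sub_cancel_left]
  simpa using abs_sub_le_of_le_of_le (Real.ofDigits_nonneg _) (Real.ofDigits_le_one _)
    (Real.ofDigits_nonneg fun i => a' (i + p)) (Real.ofDigits_le_one _)

variable [NeZero b]

lemma digitPrefix_add_of_eq_zero {a : ℕ → Fin b} {p l : ℕ}
    (h : ∀ i ∈ Ico p (p + l), a i = 0) : digitPrefix a (p + l) = b ^ l * digitPrefix a p := by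
  induction l with
  | zero => simp
  | succ l ih =>
    rw [← add_assoc, digitPrefix, h (p + l) ⟨by omega, by omega⟩,
      ih fun i hi => h i ⟨hi.1, hi.2.trans (by omega)⟩, pow_succ']
    simp [mul_assoc]

lemma dist_ofDigits_digitPrefix_le {a : ℕ → Fin b} {p q : ℕ} (hpq : p ≤ q)
    (h : ∀ i ∈ Ico p q, a i = 0) :
    dist (ofDigits a) (digitPrefix a p * ((b : ℝ) ^ p)⁻¹) ≤ ((b : ℝ) ^ q)⁻¹ := by
  obtain ⟨l, rfl⟩ := Nat.exists_eq_add_of_le hpq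
  have hb : (b : ℝ) ≠ 0 := mod_cast NeZero.ne b
  have htail : ofDigits a - digitPrefix a p * ((b : ℝ) ^ p)⁻¹ =
      ((b : ℝ) ^ (p + l))⁻¹ * ofDigits fun i => a (i + (p + l)) := by
    have := pow_mul_ofDigits a (p + l)
    rw [digitPrefix_add_of_eq_zero h] at this
    push_cast at this
    rw [eq_inv_mul_iff_mul_eq₀ (pow_ne_zero _ hb), mul_sub, this, pow_add]
    field_simp
    ring
  rw [Real.dist_eq, htail, abs_of_nonneg (mul_nonneg (by positivity) (Real.ofDigits_nonneg _))]
  exact mul_le_of_le_one_right (by positivity) (Real.ofDigits_le_one _)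

end DigitExpansions

section SpreadDigits

open Real (ofDigits)

variable {b : ℕ} [NeZero b] (S : Set ℕ) [DecidablePred (· ∈ S)]

/-- The digit sequence that lists the digits of `a` along the positions in `S`, with zeros at all
other positions. -/
def spreadDigits (a : ℕ → Fin b) (p : ℕ) : Fin b :=
  if p ∈ S then a (Nat.count (· ∈ S) p) else 0

lemma continuous_spreadDigits : Continuous (spreadDigits (b := b) S) := by
  refine continuous_pi fun p => ?_
  unfold spreadDigits
  split_ifs <;> fun_prop

lemma digitPrefix_sub_le_spreadDigits {a a' : ℕ → Fin b} (p : ℕ)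
    (h : digitPrefix a' (Nat.count (· ∈ S) p) ≤ digitPrefix a (Nat.count (· ∈ S) p)) :
    (digitPrefix a (Nat.count (· ∈ S) p) - digitPrefix a' (Nat.count (· ∈ S) p) : ℤ) ≤
      digitPrefix (spreadDigits S a) p - digitPrefix (spreadDigits S a') p := by
  induction p with
  | zero => simp [digitPrefix]
  | succ p ih =>
    by_cases hp : p ∈ S
    · simp only [Nat.count_succ, if_pos hp, digitPrefix, spreadDigits] at h ⊢
      have hle : digitPrefix a' (Nat.count (· ∈ S) p) ≤ digitPrefix a (Nat.count (· ∈ S) p) := by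
        by_contra! hlt
        have := Nat.mul_le_mul_left b (Nat.succ_le_of_lt hlt)
        rw [Nat.mul_succ] at this
        omega
      have := mul_le_mul_of_nonneg_left (ih hle) b.cast_nonneg'
      push_cast
      linarith
    · simp only [Nat.count_succ, if_neg hp, add_zero, digitPrefix, spreadDigits] at h ⊢
      have hb : (1 : ℤ) ≤ b := mod_cast NeZero.one_le
      have := ih h
      push_cast
      simp only [Fin.val_zero, Nat.cast_zero]
      nlinarith

lemma abs_digitPrefix_sub_le_spreadDigits (a a' : ℕ → Fin b) (p : ℕ) :
    |(digitPrefix a (Nat.count (· ∈ S) p) - digitPrefix a' (Nat.count (· ∈ S) p) : ℤ)| ≤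
      |(digitPrefix (spreadDigits S a) p - digitPrefix (spreadDigits S a') p : ℤ)| := by
  wlog h : digitPrefix a' (Nat.count (· ∈ S) p) ≤ digitPrefix a (Nat.count (· ∈ S) p)
    generalizing a a'
  · rw [abs_sub_comm, abs_sub_comm (digitPrefix (spreadDigits S a) p : ℤ)]
    exact this a' a (le_of_not_ge h)
  rw [abs_of_nonneg (sub_nonneg.2 (mod_cast h))]
  exact (digitPrefix_sub_le_spreadDigits S p h).trans (le_abs_self _)

lemma pow_count_mul_dist_ofDigits_le (a a' : ℕ → Fin b) (p : ℕ) :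
    (b : ℝ) ^ Nat.count (· ∈ S) p * dist (ofDigits a) (ofDigits a') ≤
      (b : ℝ) ^ p * dist (ofDigits (spreadDigits S a)) (ofDigits (spreadDigits S a')) + 2 := by
  have hprefix := abs_pow_mul_sub_digitPrefix_sub_le_one a a' (Nat.count (· ∈ S) p)
  have hspread := abs_pow_mul_sub_digitPrefix_sub_le_one (spreadDigits S a) (spreadDigits S a') p
  have hexp : |(digitPrefix a (Nat.count (· ∈ S) p) : ℝ) - digitPrefix a' (Nat.count (· ∈ S) p)| ≤
      |(digitPrefix (spreadDigits S a) p : ℝ) - digitPrefix (spreadDigits S a') p| :=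
    mod_cast abs_digitPrefix_sub_le_spreadDigits S a a' p
  have habs (n : ℕ) (x y : ℝ) : (b : ℝ) ^ n * dist x y = |(b : ℝ) ^ n * (x - y)| := by
    rw [abs_mul, abs_of_nonneg (by positivity), Real.dist_eq]
  rw [habs, habs]
  rw [abs_sub_comm] at hspread
  linarith [(abs_sub_abs_le_abs_sub _ _).trans hprefix,
    (abs_sub_abs_le_abs_sub _ _).trans hspread]

lemma dist_ofDigits_le_of_dist_spreadDigits_le {s : ℝ}
    (hS : ∀ p : ℕ, s * p ≤ Nat.count (· ∈ S) p) (a a' : ℕ → Fin b) (p : ℕ)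
    (h : dist (ofDigits (spreadDigits S a)) (ofDigits (spreadDigits S a')) ≤ (b : ℝ)⁻¹ ^ p) :
    dist (ofDigits a) (ofDigits a') ≤ 3 * ((b : ℝ)⁻¹ ^ p) ^ s := by
  have hb : (1 : ℝ) ≤ b := mod_cast NeZero.one_le
  have hb0 : (0 : ℝ) < b := by linarith
  have hcount : (b : ℝ) ^ Nat.count (· ∈ S) p * dist (ofDigits a) (ofDigits a') ≤ 3 := by
    have hpow : (b : ℝ) ^ p * (b : ℝ)⁻¹ ^ p = 1 := by
      rw [← mul_pow, mul_inv_cancel₀ hb0.ne', one_pow]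
    linarith [pow_count_mul_dist_ofDigits_le S a a' p,
      mul_le_mul_of_nonneg_left h (by positivity : (0 : ℝ) ≤ (b : ℝ) ^ p)]
  have hrpow : ((b : ℝ)⁻¹ ^ p) ^ s = ((b : ℝ) ^ (s * p))⁻¹ := by
    rw [inv_pow, Real.inv_rpow (by positivity), ← Real.rpow_natCast, ← Real.rpow_mul hb0.le,
      mul_comm]
  rw [hrpow, ← div_eq_mul_inv, le_div_iff₀' (by positivity)]
  refine le_trans ?_ hcount
  gcongr
  rw [← Real.rpow_natCast]
  exact Real.rpow_le_rpow_of_exponent_le hb (hS p)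

lemma dist_ofDigits_le_rpow_dist_spreadDigits (hb : 1 < b) {s : ℝ} (hs : 0 < s)
    (hS : ∀ p : ℕ, s * p ≤ Nat.count (· ∈ S) p) (a a' : ℕ → Fin b) :
    dist (ofDigits a) (ofDigits a') ≤
      3 * (b : ℝ) ^ s * dist (ofDigits (spreadDigits S a)) (ofDigits (spreadDigits S a')) ^ s := by
  have hb1 : (b : ℝ)⁻¹ < 1 := inv_lt_one_of_one_lt₀ (mod_cast hb)
  have hb0 : (0 : ℝ) < (b : ℝ)⁻¹ := by positivity
  have hclose := dist_ofDigits_le_of_dist_spreadDigits_le S hS a a'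
  have hr1 : dist (ofDigits (spreadDigits S a)) (ofDigits (spreadDigits S a')) ≤ 1 :=
    Real.dist_le_of_mem_Icc_01 ⟨Real.ofDigits_nonneg _, Real.ofDigits_le_one _⟩
      ⟨Real.ofDigits_nonneg _, Real.ofDigits_le_one _⟩
  have hr0 : 0 ≤ dist (ofDigits (spreadDigits S a)) (ofDigits (spreadDigits S a')) := dist_nonneg
  generalize dist (ofDigits (spreadDigits S a)) (ofDigits (spreadDigits S a')) = r at *
  rcases hr0.eq_or_lt with rfl | hr0
  · rw [Real.zero_rpow hs.ne', mul_zero]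
    have hlim : Filter.Tendsto (fun p : ℕ => 3 * ((b : ℝ)⁻¹ ^ p) ^ s) Filter.atTop (𝓝 0) := by
      have := ((tendsto_pow_atTop_nhds_zero_of_lt_one hb0.le hb1).rpow_const
        (Or.inr hs.le)).const_mul 3
      simpa only [Real.zero_rpow hs.ne', mul_zero] using this
    exact ge_of_tendsto' hlim fun p => hclose p (by positivity)
  · obtain ⟨p, hpr, hrp⟩ := exists_nat_pow_near_of_lt_one hr0 hr1 hb0 hb1
    calc dist (ofDigits a) (ofDigits a') ≤ 3 * ((b : ℝ)⁻¹ ^ p) ^ s := hclose p hrp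
      _ ≤ 3 * (b * r) ^ s := by
        rw [pow_succ, ← div_eq_mul_inv, div_lt_iff₀' (by positivity)] at hpr
        gcongr
      _ = 3 * (b : ℝ) ^ s * r ^ s := by
        rw [Real.mul_rpow (by positivity) hr0.le, mul_assoc]

end SpreadDigits

section HausdorffDimension

lemma dimH_range_le_of_edist_le_rpow {α X Y : Type*} [EMetricSpace X] [EMetricSpace Y]
    {g : α → X} {h : α → Y} {C s : ℝ≥0} (hs : 0 < s)
    (hgh : ∀ a a', edist (h a) (h a') ≤ C * edist (g a) (g a') ^ (s : ℝ)) :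
    dimH (range h) ≤ dimH (range g) / s := by
  choose a ha using fun x : range g => x.2
  have hfac (c : α) : h (a ⟨g c, c, rfl⟩) = h c := by
    have := hgh (a ⟨g c, c, rfl⟩) c
    rwa [ha, edist_self, ENNReal.zero_rpow_of_pos (mod_cast hs), mul_zero, nonpos_iff_eq_zero,
      edist_eq_zero] at this
  have hholder : HolderWith C s (h ∘ a) := fun x y => by
    simpa only [ha, Function.comp_apply, Subtype.edist_eq] using hgh (a x) (a y)
  have hsub : range h ⊆ range (h ∘ a) := by
    rintro _ ⟨c, rfl⟩
    exact ⟨⟨g c, c, rfl⟩, hfac c⟩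
  calc dimH (range h) ≤ dimH (range (h ∘ a)) := dimH_mono hsub
    _ ≤ dimH (univ : Set (range g)) / s := hholder.dimH_range_le hs
    _ = dimH (range g) / s := by
      rw [← isometry_subtype_coe.dimH_image, image_univ, Subtype.range_coe]

lemma dimH_range_ofDigits {b : ℕ} {ι : Type*} [Fintype ι] (hb : 1 < b) :
    dimH (range fun (e : ι → ℕ → Fin b) i => Real.ofDigits (e i)) = Fintype.card ι := by
  have hrange : range (fun (e : ι → ℕ → Fin b) i => Real.ofDigits (e i)) =
      univ.pi fun _ => Icc (0 : ℝ) 1 := by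
    have hI : range (Real.ofDigits (b := b)) = Icc 0 1 := by
      refine Subset.antisymm ?_ ?_
      · rintro _ ⟨a, rfl⟩
        exact ⟨Real.ofDigits_nonneg a, Real.ofDigits_le_one a⟩
      · simpa only [SurjOn, image_univ] using Real.ofDigits_SurjOn hb
    rw [← hI]
    exact range_piMap fun _ => Real.ofDigits
  rw [hrange, Real.dimH_of_nonempty_interior, Module.finrank_fintype_fun_eq_card]
  rw [interior_pi_set finite_univ, univ_pi_nonempty_iff]
  simp

end HausdorffDimension

section SpreadDigitSet

open Real (ofDigits)

variable {b : ℕ} [NeZero b] {ι : Type*} (S : Set ℕ) [DecidablePred (· ∈ S)]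

/-- The point whose `i`-th coordinate has the base-`b` digits `e i`, spread along the positions in
`S`. -/
def spreadPoint (e : ι → ℕ → Fin b) : EuclideanSpace ℝ ι :=
  WithLp.toLp 2 fun i => ofDigits (spreadDigits S (e i))

variable (b ι) in
/-- Falconer's compact set of points whose coordinates have base-`b` expansions supported in `S`. -/
def spreadDigitSet : Set (EuclideanSpace ℝ ι) :=
  range (spreadPoint (b := b) S)

lemma isCompact_spreadDigitSet : IsCompact (spreadDigitSet b ι S) := by
  have := continuous_spreadDigits (b := b) S
  have := Real.continuous_ofDigits (b := b)
  refine isCompact_range ((PiLp.continuous_toLp 2 _).comp ?_)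
  fun_prop

variable [Fintype ι]

lemma card_mul_le_dimH_spreadDigitSet (hb : 1 < b) {s : ℝ≥0} (hs : 0 < s)
    (hS : ∀ p : ℕ, s * p ≤ (Nat.count (· ∈ S) p : ℝ)) :
    (Fintype.card ι : ℝ≥0∞) * s ≤ dimH (spreadDigitSet b ι S) := by
  have hholder (e e' : ι → ℕ → Fin b) :
      edist (fun i => ofDigits (e i)) (fun i => ofDigits (e' i)) ≤
        (3 * (b : ℝ≥0) ^ (s : ℝ) : ℝ≥0) * edist (spreadPoint S e) (spreadPoint S e') ^ (s : ℝ) := by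
    rw [edist_nndist, edist_nndist, ← ENNReal.coe_rpow_of_nonneg _ s.coe_nonneg, ← ENNReal.coe_mul,
      ENNReal.coe_le_coe, nndist_pi_le_iff]
    intro i
    rw [← NNReal.coe_le_coe]
    push_cast
    refine le_trans (dist_ofDigits_le_rpow_dist_spreadDigits S hb hs hS (e i) (e' i)) ?_
    exact mul_le_mul_of_nonneg_left (Real.rpow_le_rpow dist_nonneg
      (PiLp.dist_apply_le (spreadPoint S e) (spreadPoint S e') i) s.coe_nonneg) (by positivity)
  have := dimH_range_le_of_edist_le_rpow hs hholder
  rwa [dimH_range_ofDigits hb,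
    ENNReal.le_div_iff_mul_le (Or.inl (by simpa using hs.ne')) (Or.inl ENNReal.coe_ne_top)] at this

end SpreadDigitSet

section Distances

/-- The set of distances between points of `E`. -/
def distanceSet {X : Type*} [PseudoMetricSpace X] (E : Set X) : Set ℝ :=
  image2 dist E E

variable {ι : Type*} [Fintype ι]

lemma dist_le_sqrt_card_mul {x y : EuclideanSpace ℝ ι} {r : ℝ} (hr : 0 ≤ r)
    (h : ∀ i, dist (x i) (y i) ≤ r) : dist x y ≤ √(Fintype.card ι) * r := by
  rw [EuclideanSpace.dist_eq, ← Real.sqrt_sq hr, ← Real.sqrt_mul (Nat.cast_nonneg _),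
    ← nsmul_eq_mul]
  exact Real.sqrt_le_sqrt (Finset.sum_le_card_nsmul _ _ _ fun i _ => by gcongr; exact h i)

lemma exists_dist_toLp_mul_eq_sqrt_mul {M : ℕ} {u v : ι → ℕ} (hu : ∀ i, u i ≤ M)
    (hv : ∀ i, v i ≤ M) {h : ℝ} (hh : 0 ≤ h) :
    ∃ m ≤ Fintype.card ι * M ^ 2,
      dist (WithLp.toLp 2 fun i => u i * h : EuclideanSpace ℝ ι) (WithLp.toLp 2 fun i => v i * h) =
        √m * h := by
  refine ⟨∑ i, ((u i : ℤ) - v i).natAbs ^ 2, ?_, ?_⟩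
  · refine (Finset.sum_le_card_nsmul _ _ (M ^ 2) fun i _ => ?_).trans_eq (by simp)
    have := hu i
    have := hv i
    gcongr
    omega
  · rw [EuclideanSpace.dist_eq, ← Real.sqrt_sq hh, ← Real.sqrt_mul' _ (sq_nonneg h)]
    congr 1
    push_cast [Nat.cast_natAbs]
    rw [Finset.sum_mul]
    refine Finset.sum_congr rfl fun i _ => ?_
    rw [Real.sqrt_sq hh, Real.dist_eq, ← sub_mul, abs_mul, abs_of_nonneg hh, mul_pow]

variable {b : ℕ} [NeZero b] {S : Set ℕ} [DecidablePred (· ∈ S)]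

lemma dist_spreadPoint_digitPrefix_le {p q : ℕ} (hpq : p ≤ q) (hS : ∀ i ∈ Ico p q, i ∉ S)
    (e : ι → ℕ → Fin b) :
    dist (spreadPoint S e)
        (WithLp.toLp 2 fun i => digitPrefix (spreadDigits S (e i)) p * ((b : ℝ) ^ p)⁻¹) ≤
      √(Fintype.card ι) * ((b : ℝ) ^ q)⁻¹ :=
  dist_le_sqrt_card_mul (by positivity) fun i =>
    dist_ofDigits_digitPrefix_le hpq fun l hl => if_neg (hS l hl)

lemma exists_dist_dist_spreadPoint_sqrt_mul_le {p q : ℕ} (hpq : p ≤ q)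
    (hS : ∀ i ∈ Ico p q, i ∉ S) (e e' : ι → ℕ → Fin b) :
    ∃ m ≤ Fintype.card ι * (b ^ p) ^ 2,
      dist (dist (spreadPoint S e) (spreadPoint S e')) (√m * ((b : ℝ) ^ p)⁻¹) ≤
        2 * (√(Fintype.card ι) * ((b : ℝ) ^ q)⁻¹) := by
  obtain ⟨m, hm, hdist⟩ := exists_dist_toLp_mul_eq_sqrt_mul (h := ((b : ℝ) ^ p)⁻¹)
    (fun i => (digitPrefix_lt (spreadDigits S (e i)) p).le)
    (fun i => (digitPrefix_lt (spreadDigits S (e' i)) p).le) (by positivity)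
  refine ⟨m, hm, ?_⟩
  rw [← hdist, two_mul]
  exact (dist_dist_dist_le _ _ _ _).trans (add_le_add
    (dist_spreadPoint_digitPrefix_le hpq hS e) (dist_spreadPoint_digitPrefix_le hpq hS e'))

lemma volume_distanceSet_spreadDigitSet_le {p q : ℕ} (hpq : p ≤ q) (hS : ∀ i ∈ Ico p q, i ∉ S) :
    volume (distanceSet (spreadDigitSet b ι S)) ≤
      ENNReal.ofReal ((Fintype.card ι * ((b : ℝ) ^ p) ^ 2 + 1) *
        (4 * (√(Fintype.card ι) * ((b : ℝ) ^ q)⁻¹))) := by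
  set n := Fintype.card ι * (b ^ p) ^ 2 + 1 with hn
  set r := 2 * (√(Fintype.card ι) * ((b : ℝ) ^ q)⁻¹) with hr
  have hcover : distanceSet (spreadDigitSet b ι S) ⊆
      ⋃ m ∈ Finset.range n, closedBall (√m * ((b : ℝ) ^ p)⁻¹) r := by
    rintro _ ⟨_, ⟨e, rfl⟩, _, ⟨e', rfl⟩, rfl⟩
    obtain ⟨m, hm, hdist⟩ := exists_dist_dist_spreadPoint_sqrt_mul_le hpq hS e e'
    exact mem_biUnion (Finset.mem_coe.2 (Finset.mem_range.2 (Nat.lt_succ_of_le hm))) hdist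
  calc volume (distanceSet (spreadDigitSet b ι S))
      ≤ ∑ m ∈ Finset.range n, volume (closedBall (√m * ((b : ℝ) ^ p)⁻¹) r) :=
        (measure_mono hcover).trans (measure_biUnion_finset_le _ _)
    _ = ENNReal.ofReal (n * (2 * r)) := by
        simp only [Real.volume_closedBall, Finset.sum_const, Finset.card_range, nsmul_eq_mul]
        rw [ENNReal.ofReal_mul n.cast_nonneg, ENNReal.ofReal_natCast]
    _ = _ := by
        rw [hn, hr]
        push_cast
        ring_nf

lemma volume_distanceSet_spreadDigitSet_eq_zero (hb : 1 < b)
    (hS : ∀ N, ∃ p q, 2 * p + N ≤ q ∧ ∀ i ∈ Ico p q, i ∉ S) :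
    volume (distanceSet (spreadDigitSet b ι S)) = 0 := by
  set c : ℝ := (Fintype.card ι + 1) * (4 * √(Fintype.card ι)) with hc
  have hb' : (1 : ℝ) < b := mod_cast hb
  have hle (N : ℕ) : volume (distanceSet (spreadDigitSet b ι S)) ≤
      ENNReal.ofReal (c * (b : ℝ)⁻¹ ^ N) := by
    obtain ⟨p, q, hpq, hgap⟩ := hS N
    refine (volume_distanceSet_spreadDigitSet_le (by omega) hgap).trans
      (ENNReal.ofReal_le_ofReal ?_)
    calc (Fintype.card ι * ((b : ℝ) ^ p) ^ 2 + 1) * (4 * (√(Fintype.card ι) * ((b : ℝ) ^ q)⁻¹))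
        ≤ (Fintype.card ι * ((b : ℝ) ^ p) ^ 2 + ((b : ℝ) ^ p) ^ 2) *
            (4 * (√(Fintype.card ι) * ((b : ℝ) ^ (2 * p + N))⁻¹)) := by
          gcongr
          · exact one_le_pow₀ (one_le_pow₀ hb'.le)
          · exact hb'.le
      _ = c * (b : ℝ)⁻¹ ^ N := by
          rw [hc, pow_add, pow_mul', inv_pow]
          field_simp
  have hlim : Filter.Tendsto (fun N : ℕ => ENNReal.ofReal (c * (b : ℝ)⁻¹ ^ N)) Filter.atTop
      (𝓝 0) := by
    simpa using ENNReal.tendsto_ofReal ((tendsto_pow_atTop_nhds_zero_of_lt_one (by positivity)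
      (inv_lt_one_of_one_lt₀ hb')).const_mul c)
  exact nonpos_iff_eq_zero.1 (ge_of_tendsto' hlim hle)

end Distances

lemma exists_isCompact_lt_dimH_volume_distanceSet_eq_zero (ι : Type*) [Fintype ι] [Nonempty ι]
    {t : ℝ} (ht : t < Fintype.card ι / 2) :
    ∃ E : Set (EuclideanSpace ℝ ι), IsCompact E ∧ ENNReal.ofReal t < dimH E ∧
      volume (distanceSet E) = 0 := by
  classical
  have hι : (0 : ℝ) < Fintype.card ι := mod_cast Fintype.card_pos
  obtain ⟨s, hs, hs_half⟩ : ∃ s, max 0 (t / Fintype.card ι) < s ∧ s < 1 / 2 := by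
    refine exists_between (max_lt (by norm_num) ?_)
    rw [div_lt_iff₀ hι]
    linarith
  obtain ⟨hs0, hst⟩ := max_lt_iff.1 hs
  rw [div_lt_iff₀' hι] at hst
  obtain ⟨n, K, hK, hnK⟩ := exists_longGapSet_parameters hs_half
  refine ⟨spreadDigitSet 2 ι (longGapSet n K), isCompact_spreadDigitSet _, ?_,
    volume_distanceSet_spreadDigitSet_eq_zero one_lt_two (exists_gap_longGapSet hK)⟩
  lift s to ℝ≥0 using hs0.le
  calc ENNReal.ofReal t < ENNReal.ofReal (Fintype.card ι * s) :=
        (ENNReal.ofReal_lt_ofReal_iff (mul_pos hι hs0)).2 hst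
    _ = Fintype.card ι * s := by
        rw [ENNReal.ofReal_mul hι.le, ENNReal.ofReal_natCast, ENNReal.ofReal_coe_nnreal]
    _ ≤ dimH (spreadDigitSet 2 ι (longGapSet n K)) :=
        card_mul_le_dimH_spreadDigitSet _ one_lt_two (mod_cast hs0)
          (mul_le_count_longGapSet hs0.le (by omega) hnK)

section SimplexConfigurations

variable {d k : ℕ}

lemma volume_Tconf_eq_zero_of_volume_distanceSet_eq_zero (hk : 1 ≤ k) {E : Set (Pt d)}
    (hE : volume (distanceSet E) = 0) : volume (Tconf d k E) = 0 := by
  let edge : PairIdx k := ⟨(0, Fin.last k), Fin.lt_def.2 (by simpa using Nat.lt_of_succ_le hk)⟩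
  refine measure_mono_null ?_
    (Measure.pi_eval_preimage_null (fun _ : PairIdx k => volume) (i := edge) hE)
  rintro _ ⟨x, ⟨hx, -⟩, rfl⟩
  exact mem_image2_of_mem (hx 0) (hx (Fin.last k))

lemma Tconf_eq_empty_of_subset_submodule {E : Set (Pt d)} {W : Submodule ℝ (Pt d)} (hE : E ⊆ W)
    (hW : Module.finrank ℝ W < k) : Tconf d k E = ∅ := by
  rw [Tconf, image_eq_empty, eq_empty_iff_forall_notMem]
  rintro x ⟨hx, hli⟩
  have hliW : LinearIndependent ℝ fun i : Fin k =>
      (⟨x i.succ - x 0, W.sub_mem (hE (hx _)) (hE (hx _))⟩ : W) :=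
    LinearIndependent.of_comp W.subtype hli
  have := hliW.fintype_card_le_finrank
  rw [Fintype.card_fin] at this
  omega

lemma exists_isCompact_dimH_eq_Tconf_eq_empty {n : ℕ} (hnd : n ≤ d) (hnk : n < k) :
    ∃ E : Set (Pt d), IsCompact E ∧ dimH E = n ∧ Tconf d k E = ∅ := by
  obtain ⟨v, hv⟩ : ∃ v : Fin n → Pt d, LinearIndependent ℝ v :=
    exists_linearIndependent_of_le_finrank (by rwa [finrank_euclideanSpace_fin])
  let W : Submodule ℝ (Pt d) := Submodule.span ℝ (range v)
  have hW : Module.finrank ℝ W = n := by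
    rw [finrank_span_eq_card hv, Fintype.card_fin]
  refine ⟨Subtype.val '' closedBall (0 : W) 1,
    (isCompact_closedBall _ _).image continuous_subtype_val, ?_,
    Tconf_eq_empty_of_subset_submodule (Subtype.coe_image_subset _ _) (hW.trans_lt hnk)⟩
  rw [isometry_subtype_coe.dimH_image, Real.dimH_of_mem_nhds (closedBall_mem_nhds 0 one_pos), hW]

lemma exists_isCompact_lt_dimH_volume_Tconf_eq_zero (hk : 1 ≤ k) (hkd : k ≤ d) {t : ℝ}
    (ht : t < max ((k : ℝ) - 1) ((d : ℝ) / 2)) :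
    ∃ E : Set (Pt d), IsCompact E ∧ ENNReal.ofReal t < dimH E ∧ volume (Tconf d k E) = 0 := by
  rcases lt_or_ge t (d / 2) with htd | hdt
  · have : Nonempty (Fin d) := ⟨⟨0, by omega⟩⟩
    obtain ⟨E, hE, hdim, hdist⟩ :=
      exists_isCompact_lt_dimH_volume_distanceSet_eq_zero (Fin d) (by rwa [Fintype.card_fin])
    exact ⟨E, hE, hdim, volume_Tconf_eq_zero_of_volume_distanceSet_eq_zero hk hdist⟩
  · obtain ⟨E, hE, hdim, hempty⟩ :=
      exists_isCompact_dimH_eq_Tconf_eq_empty (d := d) (k := k) (n := k - 1) (by omega) (by omega)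
    refine ⟨E, hE, ?_, by rw [hempty, measure_empty]⟩
    have ht0 : 0 ≤ t := (by positivity : (0 : ℝ) ≤ d / 2).trans hdt
    rw [hdim, ← ENNReal.ofReal_natCast, ENNReal.ofReal_lt_ofReal_iff_of_nonneg ht0,
      Nat.cast_pred hk]
    exact (lt_max_iff.1 ht).resolve_right hdt.not_gt

lemma dimH_le_natCast (E : Set (Pt d)) : dimH E ≤ d :=
  (dimH_mono (subset_univ E)).trans_eq
    (by rw [Real.dimH_univ_eq_finrank, finrank_euclideanSpace_fin])

end SimplexConfigurations

theorem stmt5_general (d k : ℕ) (hk : 1 ≤ k) (hkd : k ≤ d) :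
    (∀ t : ℝ, t < max ((k : ℝ) - 1) ((d : ℝ) / 2) →
      ∃ E : Set (Pt d), IsCompact E ∧ ENNReal.ofReal t < dimH E ∧
        volume (Tconf d k E) = 0) ∧
    max ((k : ℝ) - 1) ((d : ℝ) / 2) ≤
      sInf {α : ℝ | ∀ E : Set (Pt d), IsCompact E → ENNReal.ofReal α < dimH E →
        0 < volume (Tconf d k E)} := by
  refine ⟨fun t => exists_isCompact_lt_dimH_volume_Tconf_eq_zero hk hkd,
    le_csInf ⟨d, fun E _ hE => ?_⟩ fun α hα => ?_⟩
  · rw [ENNReal.ofReal_natCast] at hE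
    exact absurd (dimH_le_natCast E) hE.not_ge
  · by_contra! hlt
    obtain ⟨E, hE, hdim, hvol⟩ := exists_isCompact_lt_dimH_volume_Tconf_eq_zero hk hkd hlt
    exact (hα E hE hdim).ne' hvol

theorem stmt5 (d k : ℕ) (hd : 2 ≤ d) (hk : 2 ≤ k) (hkd : k ≤ d) :
    (∀ t : ℝ, t < max ((k : ℝ) - 1) ((d : ℝ) / 2) →
      ∃ E : Set (Pt d), IsCompact E ∧ ENNReal.ofReal t < dimH E ∧
        volume (Tconf d k E) = 0) ∧
    max ((k : ℝ) - 1) ((d : ℝ) / 2) ≤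
      sInf {α : ℝ | ∀ E : Set (Pt d), IsCompact E → ENNReal.ofReal α < dimH E →
        0 < volume (Tconf d k E)} :=
  stmt5_general d k (by omega) hkd
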